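/- Let q and u be real numbers with 0 < q < 1 and 0 < u < 1. Then ∏_{i=0}^∞ 1/(1 − u·q^i) = ∑_{n=0}^∞ u^n / ((1 − q)(1 − q^2)⋯(1 − q^n)); equivalently, for every n ≥ 0, the coefficient of u^n in the power-series expansion of ∏_{i=0}^∞ 1/(1 − u·q^i) equals 1/((1 − q^n)⋯(1 − q)). -/

import Mathlib

/-!
Write `(a; q)ₙ = ∏_{k < n} (1 - a qᵏ)` and `e(x) = ∑ xⁿ / (q; q)ₙ`. Comparing coefficients gives the
functional equation `e(x q) = (1 - x) e(x)`, hence `e(x q^N) = (x; q)_N e(x)`. As `N → ∞` the left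
side tends to `e(0) = 1`, so `e(x)` is the inverse of the infinite product `∏ (1 - x qⁱ)`; in
particular that product is nonzero and can be inverted factor by factor.
-/

open Filter Topology

section CommRing

variable {R : Type*} [CommRing R]

/-- The `q`-Pochhammer symbol `(a; q)ₙ = (1 - a)(1 - a q) ⋯ (1 - a qⁿ⁻¹)`. -/
def qPochhammer (a q : R) (n : ℕ) : R :=
  ∏ k ∈ Finset.range n, (1 - a * q ^ k)

theorem qPochhammer_zero (a q : R) : qPochhammer a q 0 = 1 :=
  Finset.prod_range_zero _

theorem qPochhammer_succ (a q : R) (n : ℕ) :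
    qPochhammer a q (n + 1) = qPochhammer a q n * (1 - a * q ^ n) :=
  Finset.prod_range_succ _ _

theorem qPochhammer_self (q : R) (n : ℕ) :
    qPochhammer q q n = ∏ k ∈ Finset.range n, (1 - q ^ (k + 1)) := by
  simp only [qPochhammer, pow_succ']

end CommRing

theorem pow_succ_sub_div_qPochhammer_self {K : Type*} [Field K] {q : K} {n : ℕ}
    (hn : qPochhammer q q (n + 1) ≠ 0) (x : K) :
    x ^ (n + 1) / qPochhammer q q (n + 1) - (x * q) ^ (n + 1) / qPochhammer q q (n + 1) =
      x * (x ^ n / qPochhammer q q n) := by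
  rw [qPochhammer_succ] at hn ⊢
  have denom_ne_zero : qPochhammer q q n ≠ 0 := left_ne_zero_of_mul hn
  have factor_ne_zero : 1 - q * q ^ n ≠ 0 := right_ne_zero_of_mul hn
  field_simp
  ring

section NormedField

variable {𝕜 : Type*} [NormedField 𝕜] {q x : 𝕜}

/-- The `q`-exponential `∑ xⁿ / (q; q)ₙ` (the one usually written `e_q`), for `‖q‖ < 1` and
`‖x‖ < 1`; elsewhere a vanishing denominator or a divergent sum gives junk values. -/
noncomputable def qExp (q x : 𝕜) : 𝕜 :=
  ∑' n : ℕ, x ^ n / qPochhammer q q n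

theorem norm_mul_pow_le (x : 𝕜) (hq : ‖q‖ ≤ 1) (n : ℕ) : ‖x * q ^ n‖ ≤ ‖x‖ := by
  rw [norm_mul, norm_pow]
  exact mul_le_of_le_one_right (norm_nonneg x) (pow_le_one₀ (norm_nonneg q) hq)

theorem qPochhammer_ne_zero (hx : ‖x‖ < 1) (hq : ‖q‖ ≤ 1) (n : ℕ) : qPochhammer x q n ≠ 0 :=
  Finset.prod_ne_zero_iff.2 fun k _ =>
    (isUnit_one_sub_of_norm_lt_one ((norm_mul_pow_le x hq k).trans_lt hx)).ne_zero

theorem tendsto_mul_pow_nhds_zero (x : 𝕜) (hq : ‖q‖ < 1) :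
    Tendsto (fun n : ℕ => x * q ^ n) atTop (𝓝 0) := by
  simpa only [mul_zero] using (tendsto_pow_atTop_nhds_zero_of_norm_lt_one hq).const_mul x

theorem summable_norm_pow_div_qPochhammer_self (hq : ‖q‖ < 1) (hx : ‖x‖ < 1) :
    Summable fun n : ℕ => ‖x ^ n / qPochhammer q q n‖ := by
  have ratio_tendsto : Tendsto (fun n : ℕ => ‖x / (1 - q * q ^ n)‖) atTop (𝓝 ‖x‖) := by
    have denom_tendsto : Tendsto (fun n : ℕ => 1 - q * q ^ n) atTop (𝓝 1) := by
      simpa only [sub_zero] using (tendsto_mul_pow_nhds_zero q hq).const_sub 1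
    simpa only [Pi.div_apply, div_one] using (tendsto_const_nhds.div denom_tendsto one_ne_zero).norm
  obtain ⟨r, hxr, hr⟩ := exists_between hx
  refine summable_of_ratio_norm_eventually_le hr ?_
  filter_upwards [ratio_tendsto.eventually_le_const hxr] with n ratio_le
  rw [norm_norm, norm_norm, qPochhammer_succ, pow_succ, mul_div_mul_comm, norm_mul, mul_comm]
  gcongr

theorem qExp_zero (q : 𝕜) : qExp q 0 = 1 := by
  rw [qExp, tsum_eq_single 0 fun n hn => by rw [zero_pow hn, zero_div], pow_zero,
    qPochhammer_zero, div_one]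

variable [CompleteSpace 𝕜]

theorem qExp_mul_self (hq : ‖q‖ < 1) (hx : ‖x‖ < 1) : qExp q (x * q) = (1 - x) * qExp q x := by
  have hxq : ‖x * q‖ < 1 := by
    simpa only [pow_one] using (norm_mul_pow_le x hq.le 1).trans_lt hx
  have summable_x := (summable_norm_pow_div_qPochhammer_self hq hx).of_norm
  have summable_xq := (summable_norm_pow_div_qPochhammer_self hq hxq).of_norm
  have sub_eq : qExp q x - qExp q (x * q) = x * qExp q x := calc
    _ = ∑' n : ℕ, (x ^ n / qPochhammer q q n - (x * q) ^ n / qPochhammer q q n) :=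
      (summable_x.tsum_sub summable_xq).symm
    _ = ∑' n : ℕ, x * (x ^ n / qPochhammer q q n) := by
      rw [(summable_x.sub summable_xq).tsum_eq_zero_add, pow_zero, pow_zero, sub_self, zero_add]
      exact tsum_congr fun n =>
        pow_succ_sub_div_qPochhammer_self (qPochhammer_ne_zero hq hq.le (n + 1)) x
    _ = x * qExp q x := tsum_mul_left
  linear_combination -sub_eq

theorem qExp_mul_pow (hq : ‖q‖ < 1) (hx : ‖x‖ < 1) (N : ℕ) :
    qExp q (x * q ^ N) = qPochhammer x q N * qExp q x := by
  induction N with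
  | zero => rw [pow_zero, mul_one, qPochhammer_zero, one_mul]
  | succ N ih =>
    rw [pow_succ, ← mul_assoc, qExp_mul_self hq ((norm_mul_pow_le x hq.le N).trans_lt hx),
      ih, qPochhammer_succ]
    ring

theorem multipliable_one_sub_mul_pow (x : 𝕜) (hq : ‖q‖ < 1) :
    Multipliable fun i : ℕ => 1 - x * q ^ i := by
  have summable_norm : Summable fun i : ℕ => ‖-(x * q ^ i)‖ := by
    simpa only [norm_neg, norm_mul, norm_pow] using
      (summable_geometric_of_lt_one (norm_nonneg q) hq).mul_left ‖x‖
  simpa only [← sub_eq_add_neg] using multipliable_one_add_of_summable summable_norm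

theorem tendsto_qExp_mul_pow (hq : ‖q‖ < 1) (hx : ‖x‖ < 1) :
    Tendsto (fun N : ℕ => qExp q (x * q ^ N)) atTop (𝓝 (qExp q 0)) := by
  refine tendsto_tsum_of_dominated_convergence (summable_norm_pow_div_qPochhammer_self hq hx)
    (fun n => ((tendsto_mul_pow_nhds_zero x hq).pow n).div_const _)
    (Eventually.of_forall fun N n => ?_)
  rw [norm_div, norm_div, norm_pow, norm_pow]
  gcongr
  exact norm_mul_pow_le x hq.le N

theorem tprod_one_sub_mul_pow_mul_qExp (hq : ‖q‖ < 1) (hx : ‖x‖ < 1) :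
    (∏' i : ℕ, (1 - x * q ^ i)) * qExp q x = 1 := by
  have tendsto_tprod : Tendsto (fun N : ℕ => qExp q (x * q ^ N)) atTop
      (𝓝 ((∏' i : ℕ, (1 - x * q ^ i)) * qExp q x)) := by
    simp only [qExp_mul_pow hq hx]
    exact (multipliable_one_sub_mul_pow x hq).hasProd.tendsto_prod_nat.mul_const _
  have tendsto_one := tendsto_qExp_mul_pow hq hx
  rw [qExp_zero] at tendsto_one
  exact tendsto_nhds_unique tendsto_tprod tendsto_one

theorem hasProd_inv_one_sub_mul_pow (hq : ‖q‖ < 1) (hx : ‖x‖ < 1) :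
    HasProd (fun i : ℕ => (1 - x * q ^ i)⁻¹) (qExp q x) := by
  have tprod_mul := tprod_one_sub_mul_pow_mul_qExp hq hx
  rw [eq_inv_of_mul_eq_one_right tprod_mul]
  exact (multipliable_one_sub_mul_pow x hq).hasProd.inv₀ (left_ne_zero_of_mul_eq_one tprod_mul)

end NormedField

theorem stmt_2_general {𝕜 : Type*} [NormedField 𝕜] [CompleteSpace 𝕜] {q u : 𝕜}
    (hq : ‖q‖ < 1) (hu : ‖u‖ < 1) :
    Summable (fun n : ℕ => u ^ n / ∏ k ∈ Finset.range n, (1 - q ^ (k + 1))) ∧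
    HasProd (fun i : ℕ => (1 - u * q ^ i)⁻¹)
      (∑' n : ℕ, u ^ n / ∏ k ∈ Finset.range n, (1 - q ^ (k + 1))) := by
  simp only [← qPochhammer_self]
  exact ⟨(summable_norm_pow_div_qPochhammer_self hq hu).of_norm, hasProd_inv_one_sub_mul_pow hq hu⟩

/-- For real `0 < q < 1`, `0 < u < 1`:
`∏_{i=0}^∞ 1/(1 − u qⁱ) = ∑_{n=0}^∞ uⁿ / ((1−q)(1−q²)⋯(1−qⁿ))`. -/
theorem stmt_2 (q u : ℝ) (hq0 : 0 < q) (hq1 : q < 1) (hu0 : 0 < u) (hu1 : u < 1) :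
    Summable (fun n : ℕ => u ^ n / ∏ k ∈ Finset.range n, (1 - q ^ (k + 1))) ∧
    HasProd (fun i : ℕ => (1 - u * q ^ i)⁻¹)
      (∑' n : ℕ, u ^ n / ∏ k ∈ Finset.range n, (1 - q ^ (k + 1))) :=
  stmt_2_general (by rwa [Real.norm_of_nonneg hq0.le]) (by rwa [Real.norm_of_nonneg hu0.le])
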